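/- arXiv:2503.02477 — 6 statements merged into one kernel-verified Lean document; each statement's English description precedes it below -/
import Mathlib

section
/- Let U be a real k×m matrix and V a real k×n matrix with U·Uᵀ = I_k and V·Vᵀ = I_k. Then the (m+n)×(m+n) block matrix with blocks [[I_m, Uᵀ·V], [Vᵀ·U, I_n]] is positive semidefinite. -/
open Matrix

/-- For a co-isometry `V`, the complementary projection `1 - Vᵀ * V` is positive semidefinite. -/
theorem posSemidef_one_sub_transpose_mul_self {k n : Type*} [Fintype k] [DecidableEq k]
    [Fintype n] [DecidableEq n] {V : Matrix k n ℝ} (hV : V * Vᵀ = 1) :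
    (1 - Vᵀ * V).PosSemidef := by
  have idem : Vᵀ * V * (Vᵀ * V) = Vᵀ * V := by
    rw [Matrix.mul_assoc, ← Matrix.mul_assoc V, hV, Matrix.one_mul]
  have h := posSemidef_conjTranspose_mul_self (1 - Vᵀ * V)
  simpa [conjTranspose_eq_transpose_of_trivial, Matrix.mul_sub, Matrix.sub_mul, idem] using h

/-- If U (k×m) and V (k×n) are co-isometries (U·Uᵀ = I, V·Vᵀ = I),
then the block matrix [[I_m, Uᵀ·V], [Vᵀ·U, I_n]] is positive semidefinite. -/
theorem stmt_4 (k m n : ℕ) (U : Matrix (Fin k) (Fin m) ℝ) (V : Matrix (Fin k) (Fin n) ℝ)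
    (hU : U * Uᵀ = 1) (hV : V * Vᵀ = 1) :
    (Matrix.fromBlocks (1 : Matrix (Fin m) (Fin m) ℝ) (Uᵀ * V) (Vᵀ * U)
        (1 : Matrix (Fin n) (Fin n) ℝ)).PosSemidef := by
  have hB : (Uᵀ * V)ᴴ = Vᵀ * U := by
    simp [conjTranspose_eq_transpose_of_trivial]
  have schur : Vᵀ * U * (Uᵀ * V) = Vᵀ * V := by
    rw [Matrix.mul_assoc, ← Matrix.mul_assoc U, hU, Matrix.one_mul]
  let : Invertible (1 : Matrix (Fin m) (Fin m) ℝ) := invertibleOne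
  rw [← hB, PosDef.fromBlocks₁₁ _ _ PosDef.one, hB, inv_one, Matrix.mul_one, schur]
  exact posSemidef_one_sub_transpose_mul_self hV
end

section
/- Let F (m×w), G (n×w), U (k×m), V (k×n), I' (w'×m), J (w'×n) be real matrices satisfying: F·Fᵀ = I_m, G·Gᵀ = I_n, U·Uᵀ = I_k, V·Vᵀ = I_k, I'·I'ᵀ = I_{w'}, J·Jᵀ = I_{w'} (all six are co-isometries); the square commutes: U·F = V·G; the square is independent: G·Fᵀ = Vᵀ·U; and the outer maps commute: I'·F = J·G. Then the matrix K := I'·Uᵀ satisfies K = J·Vᵀ, K·U = I', K·V = J, and K·Kᵀ = I_{w'}; moreover K is the unique real w'×k matrix satisfying K·U = I' and K·V = J. -/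
open Matrix

/-- Independent squares of co-isometries are pushouts, with mediating
map K = I'·Uᵀ = J·Vᵀ given by transposition (Bayesian inversion). -/
theorem stmt_6 (m n k w w' : ℕ)
    (F : Matrix (Fin m) (Fin w) ℝ) (G : Matrix (Fin n) (Fin w) ℝ)
    (U : Matrix (Fin k) (Fin m) ℝ) (V : Matrix (Fin k) (Fin n) ℝ)
    (I' : Matrix (Fin w') (Fin m) ℝ) (J : Matrix (Fin w') (Fin n) ℝ)
    (hF : F * Fᵀ = 1) (hG : G * Gᵀ = 1) (hU : U * Uᵀ = 1) (hV : V * Vᵀ = 1)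
    (hI' : I' * I'ᵀ = 1) (hJ : J * Jᵀ = 1)
    (hcomm : U * F = V * G) (hindep : G * Fᵀ = Vᵀ * U) (houter : I' * F = J * G) :
    (I' * Uᵀ = J * Vᵀ ∧ (I' * Uᵀ) * U = I' ∧ (I' * Uᵀ) * V = J ∧
        (I' * Uᵀ) * (I' * Uᵀ)ᵀ = 1) ∧
      ∀ K : Matrix (Fin w') (Fin k) ℝ, K * U = I' → K * V = J → K = I' * Uᵀ := by
  have hindep' : F * Gᵀ = Uᵀ * V := by
    simpa [transpose_mul] using congrArg transpose hindep
  have hI : J * Vᵀ * U = I' := by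
    rw [Matrix.mul_assoc, ← hindep, ← Matrix.mul_assoc, ← houter, Matrix.mul_assoc, hF,
      Matrix.mul_one]
  have hKV : I' * Uᵀ * V = J := by
    rw [Matrix.mul_assoc, ← hindep', ← Matrix.mul_assoc, houter, Matrix.mul_assoc, hG,
      Matrix.mul_one]
  have hK : I' * Uᵀ = J * Vᵀ := by
    rw [← hI, Matrix.mul_assoc, hU, Matrix.mul_one]
  have hKU : I' * Uᵀ * U = I' := by rw [hK, hI]
  refine ⟨⟨hK, hKU, hKV, ?_⟩, ?_⟩
  · rw [transpose_mul, transpose_transpose, ← Matrix.mul_assoc, hKU, hI']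
  · rintro K hU' -
    rw [← hU', Matrix.mul_assoc, hU, Matrix.mul_one]
end

section
/- Let f : Ω → X, g : Ω → Y, u : X → Z, v : Y → Z be functions with u∘f = v∘g, with u and v surjective, and suppose the square is independent: for all x ∈ X, y ∈ Y with u x = v y there exists ω ∈ Ω with f ω = x and g ω = y. Then for every set W and all functions i : X → W, j : Y → W with i∘f = j∘g, there exists a unique function k : Z → W with k∘u = i and k∘v = j. -/
/-- Independent squares of surjections are pushouts of sets. -/
theorem stmt_9 {Ω X Y Z : Type*} (f : Ω → X) (g : Ω → Y) (u : X → Z) (v : Y → Z)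
    (hcomm : u ∘ f = v ∘ g) (hu : Function.Surjective u) (hv : Function.Surjective v)
    (hindep : ∀ x y, u x = v y → ∃ ω, f ω = x ∧ g ω = y) :
    ∀ (W : Type*) (i : X → W) (j : Y → W), i ∘ f = j ∘ g →
      ∃! k : Z → W, k ∘ u = i ∧ k ∘ v = j := by
  intro W i j hij
  have key : ∀ x y, u x = v y → i x = j y := by
    intro x y h
    obtain ⟨ω, rfl, rfl⟩ := hindep x y h
    exact congrFun hij ω
  refine ⟨i ∘ Function.surjInv hu, ⟨?_, ?_⟩, ?_⟩
  · funext x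
    obtain ⟨y, hy⟩ := hv (u x)
    exact (key _ y ((Function.surjInv_eq hu _).trans hy.symm)).trans (key x y hy.symm).symm
  · funext y
    exact key _ y (Function.surjInv_eq hu _)
  · rintro k ⟨rfl, -⟩
    funext z
    exact congrArg k (Function.surjInv_eq hu z).symm
end

section
/- Let f₁ : Ω → X₁, f₂ : Ω → X₂, g₁ : X₁ → Y₂, g₂ : X₂ → Y₂, h₁ : X₁ → Y₁, h₂ : Y₂ → Z, k : Y₁ → Z be functions with g₁∘f₁ = g₂∘f₂ and k∘h₁ = h₂∘g₁. Suppose the composite square (AB) is independent: for all y₁ ∈ Y₁, x₂ ∈ X₂ with k y₁ = h₂ (g₂ x₂) there exists ω ∈ Ω with h₁ (f₁ ω) = y₁ and f₂ ω = x₂; and suppose square (B) is an independent pullback: for all y₁ ∈ Y₁, y₂ ∈ Y₂ with k y₁ = h₂ y₂ there exists a unique x₁ ∈ X₁ with h₁ x₁ = y₁ and g₁ x₁ = y₂. Then square (A) is independent: for all x₁ ∈ X₁, x₂ ∈ X₂ with g₁ x₁ = g₂ x₂ there exists ω ∈ Ω with f₁ ω = x₁ and f₂ ω = x₂. -/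
/-- (IP4 in Surj) If the composite rectangle (AB) is independent and
(B) is an independent pullback, then (A) is independent. -/
theorem stmt_11 {Ω X₁ X₂ Y₁ Y₂ Z : Type*}
    (f₁ : Ω → X₁) (f₂ : Ω → X₂) (g₁ : X₁ → Y₂) (g₂ : X₂ → Y₂)
    (h₁ : X₁ → Y₁) (h₂ : Y₂ → Z) (k : Y₁ → Z)
    (hA : g₁ ∘ f₁ = g₂ ∘ f₂) (hB : k ∘ h₁ = h₂ ∘ g₁)
    (hABindep : ∀ y₁ x₂, k y₁ = h₂ (g₂ x₂) → ∃ ω, h₁ (f₁ ω) = y₁ ∧ f₂ ω = x₂)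
    (hBpb : ∀ y₁ y₂, k y₁ = h₂ y₂ → ∃! x₁, h₁ x₁ = y₁ ∧ g₁ x₁ = y₂) :
    ∀ x₁ x₂, g₁ x₁ = g₂ x₂ → ∃ ω, f₁ ω = x₁ ∧ f₂ ω = x₂ := by
  intro x₁ x₂ hx
  have hk : k (h₁ x₁) = h₂ (g₁ x₁) := congrFun hB x₁
  obtain ⟨ω, hω₁, hω₂⟩ := hABindep (h₁ x₁) x₂ (hx ▸ hk)
  have hg : g₁ (f₁ ω) = g₁ x₁ := by
    rw [hx, ← hω₂]
    exact congrFun hA ω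
  exact ⟨ω, (hBpb _ _ hk).unique ⟨hω₁, hg⟩ ⟨rfl, rfl⟩, hω₂⟩
end

section
/- Let X, A, Y be finite types, and let N : X → A → ℝ and M : Y → X → ℝ be stochastic matrices: all entries are nonnegative, Σ_x N x a = 1 for all a, and Σ_y M y x = 1 for all x. Suppose (i) for every x ∈ X there exists a ∈ A with 0 < N x a (the support of N covers X), and (ii) the composite M·N is deterministic: for every a ∈ A there exists y ∈ Y with Σ_x (M y x) · (N x a) = 1. Then M is deterministic: for every x ∈ X there exists y ∈ Y with M y x = 1. -/
/-- In FinStoch, if the composite M·N of stochastic matrices is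
deterministic and the support of N covers X, then M is deterministic. -/
theorem stmt_15 {X A Y : Type*} [Fintype X] [Fintype A] [Fintype Y]
    (N : X → A → ℝ) (M : Y → X → ℝ)
    (hN0 : ∀ x a, 0 ≤ N x a) (hM0 : ∀ y x, 0 ≤ M y x)
    (hN1 : ∀ a, ∑ x, N x a = 1) (hM1 : ∀ x, ∑ y, M y x = 1)
    (hsupp : ∀ x, ∃ a, 0 < N x a)
    (hdet : ∀ a, ∃ y, ∑ x, M y x * N x a = 1) :
    ∀ x, ∃ y, M y x = 1 := by
  intro x
  obtain ⟨a, ha⟩ := hsupp x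
  obtain ⟨y, hy⟩ := hdet a
  refine ⟨y, ?_⟩
  have hM_le : ∀ x', M y x' ≤ 1 := fun x' =>
    hM1 x' ▸ Finset.single_le_sum (f := fun y' => M y' x') (fun y' _ => hM0 y' x')
      (Finset.mem_univ y)
  have hle : ∀ x' ∈ Finset.univ, M y x' * N x' a ≤ N x' a := fun x' _ =>
    mul_le_of_le_one_left (hN0 x' a) (hM_le x')
  have heq := (Finset.sum_eq_sum_iff_of_le hle).1 (hy.trans (hN1 a).symm) x (Finset.mem_univ x)
  exact (mul_eq_right₀ ha.ne').1 heq
end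

section
/- Let X and Y be types with x₀ ∈ X, and let p, q be probability mass functions on X × Y. If the first marginals satisfy p.map Prod.fst = PMF.pure x₀ and q.map Prod.fst = PMF.pure x₀, and the second marginals agree, p.map Prod.snd = q.map Prod.snd, then p = q. -/
/-- Pushforwards along functions that agree on the support are equal. -/
theorem PMF.map_congr_of_support {α β : Type*} {p : PMF α} {f g : α → β}
    (h : ∀ a ∈ p.support, f a = g a) : p.map f = p.map g := by
  classical
  ext b
  simp only [PMF.map_apply]
  refine tsum_congr fun a => ?_
  by_cases ha : p a = 0
  · simp [ha]
  · rw [h a ((p.mem_support_iff a).2 ha)]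

/-- A joint distribution with Dirac first marginal is determined by its second marginal. -/
theorem PMF.map_mk_map_snd_of_map_fst_eq_pure {X Y : Type*} {x₀ : X} {p : PMF (X × Y)}
    (hp : p.map Prod.fst = PMF.pure x₀) : (p.map Prod.snd).map (Prod.mk x₀) = p := by
  have hfst : ∀ z ∈ p.support, z.1 = x₀ := fun z hz => by
    have hmem : z.1 ∈ (p.map Prod.fst).support :=
      (PMF.mem_support_map_iff _ _ _).2 ⟨z, hz, rfl⟩
    rwa [hp, PMF.mem_support_pure_iff] at hmem
  calc (p.map Prod.snd).map (Prod.mk x₀) = p.map (Prod.mk x₀ ∘ Prod.snd) := PMF.map_comp _ _ _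
    _ = p.map id := PMF.map_congr_of_support fun z hz => Prod.ext (hfst z hz).symm rfl
    _ = p := PMF.map_id p

/-- Two probability mass functions on X × Y whose first marginals are
the same Dirac point mass and whose second marginals agree are equal. -/
theorem stmt_16 {X Y : Type*} (x₀ : X) (p q : PMF (X × Y))
    (hp : p.map Prod.fst = PMF.pure x₀) (hq : q.map Prod.fst = PMF.pure x₀)
    (hsnd : p.map Prod.snd = q.map Prod.snd) :
    p = q := by
  rw [← PMF.map_mk_map_snd_of_map_fst_eq_pure hp, hsnd,
    PMF.map_mk_map_snd_of_map_fst_eq_pure hq]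
end
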